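/- There exists C > 0 such that for every k ∈ {1,2}, every z ∈ K, every ζ' = (σ, ξ') ∈ ℝ × ℝ^n and every t̂' = (t̂_σ, t̂_{ξ'}) ∈ ℝ × ℝ^n: if m̂_k(z,ζ',t̂) = 0 (i.e. the quadratic X ↦ (X + i t̂_{ξd})² + m̂_k has a double root), then |t̂'|/C ≤ |ζ'| ≤ C |t̂'|. -/

import Mathlib

/-- `m̂_k(z,ζ',t̂) = (-1)^k i (σ + i t̂_σ)² + r_z(ξ' + i t̂_{ξ'})`, where `r_z` is the
complex-bilinear extension of the quadratic form with coefficient matrix `R`. -/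
noncomputable def mhat {n : ℕ} (R : Fin n → Fin n → ℝ) (k : ℕ)
    (σ : ℝ) (ξ : Fin n → ℝ) (tσ : ℝ) (tξ : Fin n → ℝ) : ℂ :=
  (-1 : ℂ) ^ k * Complex.I * ((σ : ℂ) + Complex.I * (tσ : ℂ)) ^ 2 +
    ∑ j, ∑ l, (R j l : ℂ) * ((ξ j : ℂ) + Complex.I * (tξ j : ℂ)) *
      ((ξ l : ℂ) + Complex.I * (tξ l : ℂ))

/-- `μ̂_k = 4 t̂_{ξd}² Re m̂_k − 4 t̂_{ξd}⁴ + (Im m̂_k)²`. -/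
noncomputable def muhat {n : ℕ} (R : Fin n → Fin n → ℝ) (k : ℕ)
    (σ : ℝ) (ξ : Fin n → ℝ) (tσ : ℝ) (tξ : Fin n → ℝ) (tξd : ℝ) : ℝ :=
  4 * tξd ^ 2 * (mhat R k σ ξ tσ tξ).re - 4 * tξd ^ 4 + (mhat R k σ ξ tσ tξ).im ^ 2

/-- Real bilinear form with coefficient matrix `R`. -/
noncomputable def bform {n : ℕ} (R : Fin n → Fin n → ℝ) (x y : Fin n → ℝ) : ℝ :=
  ∑ j, ∑ l, R j l * x j * y l

lemma bform_comb {n : ℕ} (R : Fin n → Fin n → ℝ) (x y : Fin n → ℝ) (a b : ℝ) :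
    bform R (fun j => a * x j + b * y j) (fun j => a * x j + b * y j) =
      a ^ 2 * bform R x x + a * b * (bform R x y + bform R y x) + b ^ 2 * bform R y y := by
  unfold bform
  simp only [Finset.mul_sum, ← Finset.sum_add_distrib]
  refine Finset.sum_congr rfl fun j _ => Finset.sum_congr rfl fun l _ => ?_
  ring

lemma csum_eq {n : ℕ} (R : Fin n → Fin n → ℝ) (x y : Fin n → ℝ) :
    (∑ j, ∑ l, (R j l : ℂ) * ((x j : ℂ) + Complex.I * (y j : ℂ)) *
      ((x l : ℂ) + Complex.I * (y l : ℂ))) =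
    ((bform R x x - bform R y y : ℝ) : ℂ) +
      Complex.I * ((bform R x y + bform R y x : ℝ) : ℂ) := by
  unfold bform
  push_cast
  simp only [Finset.mul_sum, ← Finset.sum_add_distrib, ← Finset.sum_sub_distrib]
  refine Finset.sum_congr rfl fun j _ => Finset.sum_congr rfl fun l _ => ?_
  linear_combination (R j l : ℂ) * y j * y l * Complex.I_sq

lemma bform_le {n : ℕ} (R M : Fin n → Fin n → ℝ) (h : ∀ j l, |R j l| ≤ M j l)
    (x : Fin n → ℝ) : bform R x x ≤ (∑ j, ∑ l, M j l) * ∑ j, (x j) ^ 2 := by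
  unfold bform
  simp only [Finset.sum_mul]
  refine Finset.sum_le_sum fun j _ => Finset.sum_le_sum fun l _ => ?_
  have hs : ∀ i, (x i) ^ 2 ≤ ∑ j, (x j) ^ 2 := fun i =>
    Finset.single_le_sum (f := fun j => (x j) ^ 2) (fun _ _ => sq_nonneg _) (Finset.mem_univ i)
  have h1 : |x j * x l| ≤ ∑ j, (x j) ^ 2 := by
    rw [abs_le]
    constructor <;> nlinarith [hs j, hs l, sq_nonneg (x j + x l), sq_nonneg (x j - x l)]
  calc R j l * x j * x l = R j l * (x j * x l) := by ring
    _ ≤ |R j l * (x j * x l)| := le_abs_self _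
    _ = |R j l| * |x j * x l| := abs_mul _ _
    _ ≤ M j l * ∑ j, (x j) ^ 2 :=
      mul_le_mul (h j l) h1 (abs_nonneg _) ((abs_nonneg _).trans (h j l))

lemma key_ineq (e A B P s t : ℝ) (he : e = 1 ∨ e = -1)
    (h1 : 0 ≤ A + 2 * P + 4 * B) (h2 : 0 ≤ A - 2 * P + 4 * B)
    (hre : A - B - 2 * e * s * t = 0) (him : e * (s ^ 2 - t ^ 2) + P = 0) :
    A + s ^ 2 ≤ 6 * (B + t ^ 2) := by
  rcases he with rfl | rfl <;>
    nlinarith [sq_nonneg (s - 2 * t), sq_nonneg (s + 2 * t)]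

lemma sqrt_step (m L X Y x y : ℝ) (hm : 0 < m) (hL : 0 ≤ L) (hy : 0 ≤ y)
    (h : X ≤ 6 * Y) (hx : m * x ≤ X) (hY : Y ≤ L * y) :
    Real.sqrt x ≤ (1 + 6 * L / m) * Real.sqrt y := by
  have hD : 0 ≤ 6 * L / m := by positivity
  have h3 : x ≤ (6 * L / m) * y := by
    rw [div_mul_eq_mul_div, le_div_iff₀ hm]; linarith
  apply Real.sqrt_le_iff.2
  refine ⟨by positivity, ?_⟩
  rw [mul_pow, Real.sq_sqrt hy]
  nlinarith [mul_nonneg hD hy, mul_nonneg (mul_nonneg hD hD) hy]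

/-- At a double root, i.e. when `m̂_k = 0`, one has `|t̂'|/C ≤ |ζ'| ≤ C |t̂'|`. -/
theorem stmt10 (n : ℕ) (K : Type*) [MetricSpace K] [CompactSpace K]
    (R : K → Fin n → Fin n → ℝ)
    (hRcont : ∀ j l, Continuous fun z => R z j l)
    (c : ℝ) (hc : 0 < c)
    (hpd : ∀ (z : K) (η : Fin n → ℝ), c * (∑ j, (η j) ^ 2) ≤ ∑ j, ∑ l, R z j l * η j * η l) :
    ∃ C > 0, ∀ k : ℕ, k = 1 ∨ k = 2 →
      ∀ (z : K) (σ : ℝ) (ξ : Fin n → ℝ) (tσ : ℝ) (tξ : Fin n → ℝ),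
        mhat (R z) k σ ξ tσ tξ = 0 →
        Real.sqrt (tσ ^ 2 + ∑ j, (tξ j) ^ 2) / C ≤ Real.sqrt (σ ^ 2 + ∑ j, (ξ j) ^ 2) ∧
        Real.sqrt (σ ^ 2 + ∑ j, (ξ j) ^ 2) ≤ C * Real.sqrt (tσ ^ 2 + ∑ j, (tξ j) ^ 2) := by
  have hb : ∀ j l, ∃ M : ℝ, ∀ z, |R z j l| ≤ M := by
    intro j l
    obtain ⟨M, hM⟩ := isCompact_univ.exists_bound_of_continuousOn (hRcont j l).continuousOn
    exact ⟨M, fun z => hM z (Set.mem_univ z)⟩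
  choose M hM using hb
  set L : ℝ := max 1 (∑ j, ∑ l, M j l) with hLdef
  set m : ℝ := min 1 c with hmdef
  have hL : 0 < L := lt_of_lt_of_le one_pos (le_max_left _ _)
  have hm : 0 < m := lt_min one_pos hc
  have hC : 0 < 1 + 6 * L / m := by positivity
  refine ⟨1 + 6 * L / m, hC, ?_⟩
  intro k hk z σ ξ tσ tξ h0
  have hpos : ∀ η, 0 ≤ bform (R z) η η := fun η =>
    le_trans (mul_nonneg hc.le (Finset.sum_nonneg fun _ _ => sq_nonneg _)) (hpd z η)
  have hlow : ∀ (s : ℝ) (η : Fin n → ℝ),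
      m * (s ^ 2 + ∑ j, (η j) ^ 2) ≤ bform (R z) η η + s ^ 2 := by
    intro s η
    have a1 : c * (∑ j, (η j) ^ 2) ≤ bform (R z) η η := hpd z η
    have a2 : 0 ≤ ∑ j, (η j) ^ 2 := Finset.sum_nonneg fun _ _ => sq_nonneg _
    have a3 := mul_le_mul_of_nonneg_right (min_le_right 1 c) a2
    have a4 := mul_le_mul_of_nonneg_right (min_le_left 1 c) (sq_nonneg s)
    rw [mul_add]; linarith
  have hup : ∀ (s : ℝ) (η : Fin n → ℝ),
      bform (R z) η η + s ^ 2 ≤ L * (s ^ 2 + ∑ j, (η j) ^ 2) := by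
    intro s η
    have a1 := bform_le (R z) M (fun j l => hM j l z) η
    have a2 : 0 ≤ ∑ j, (η j) ^ 2 := Finset.sum_nonneg fun _ _ => sq_nonneg _
    have a3 := mul_le_mul_of_nonneg_right (le_max_right 1 (∑ j, ∑ l, M j l)) a2
    have a4 := mul_le_mul_of_nonneg_right (le_max_left 1 (∑ j, ∑ l, M j l)) (sq_nonneg s)
    rw [mul_add]; linarith
  have hnn : ∀ (s : ℝ) (η : Fin n → ℝ), 0 ≤ s ^ 2 + ∑ j, (η j) ^ 2 := fun s η =>
    add_nonneg (sq_nonneg s) (Finset.sum_nonneg fun _ _ => sq_nonneg _)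
  obtain ⟨e, he, hek⟩ : ∃ e : ℝ, (e = 1 ∨ e = -1) ∧ (-1 : ℂ) ^ k = (e : ℂ) := by
    rcases hk with rfl | rfl
    · exact ⟨-1, Or.inr rfl, by norm_num⟩
    · exact ⟨1, Or.inl rfl, by norm_num⟩
  unfold mhat at h0
  rw [csum_eq, hek] at h0
  have p1 := hpos (fun j => 1 * ξ j + 2 * tξ j)
  have p2 := hpos (fun j => 1 * ξ j + (-2) * tξ j)
  have p3 := hpos (fun j => 2 * ξ j + 1 * tξ j)
  have p4 := hpos (fun j => 2 * ξ j + (-1) * tξ j)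
  rw [bform_comb] at p1 p2 p3 p4
  generalize bform (R z) ξ tξ + bform (R z) tξ ξ = P at *
  have hre := congrArg Complex.re h0
  have him := congrArg Complex.im h0
  simp [pow_two] at hre him
  have k1 := key_ineq e (bform (R z) ξ ξ) (bform (R z) tξ tξ) P σ tσ he
    (by linarith) (by linarith) (by linarith) (by linarith)
  have k2 := key_ineq (-e) (bform (R z) tξ tξ) (bform (R z) ξ ξ) P tσ σ
    (by rcases he with rfl | rfl <;> simp)
    (by linarith) (by linarith) (by linarith) (by linarith)
  constructor
  · rw [div_le_iff₀ hC, mul_comm]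
    exact sqrt_step m L _ _ _ _ hm hL.le (hnn _ _) k2 (hlow _ _) (hup _ _)
  · exact sqrt_step m L _ _ _ _ hm hL.le (hnn _ _) k1 (hlow _ _) (hup _ _)
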